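/- Let (R, Ad_Γ) be a graded von Neumann algebra. If the even part R^(0) is a type III von Neumann algebra, then R is of type III. -/

import Mathlib

noncomputable section

variable {H : Type*} [NormedAddCommGroup H] [InnerProductSpace ℂ H] [CompleteSpace H]

/-- A self-adjoint unitary operator. -/
def IsSAU (Γ : H →L[ℂ] H) : Prop := star Γ = Γ ∧ Γ * Γ = 1

/-- The even part of a graded set of operators. -/
def evenPart (R : Set (H →L[ℂ] H)) (Γ : H →L[ℂ] H) : Set (H →L[ℂ] H) :=
  {x | x ∈ R ∧ Γ * x * Γ = x}

/-- The odd part of a graded set of operators. -/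
def oddPart (R : Set (H →L[ℂ] H)) (Γ : H →L[ℂ] H) : Set (H →L[ℂ] H) :=
  {x | x ∈ R ∧ Γ * x * Γ = -x}

/-- The center of a set of operators. -/
def centerSet (R : Set (H →L[ℂ] H)) : Set (H →L[ℂ] H) :=
  {x | x ∈ R ∧ ∀ y ∈ R, x * y = y * x}

/-- An (orthogonal) projection operator. -/
def IsProjOp (e : H →L[ℂ] H) : Prop := e * e = e ∧ star e = e

/-- `e` is a subprojection of `f`. -/
def SubProj (e f : H →L[ℂ] H) : Prop := e * f = e ∧ f * e = e

/-- Murray–von Neumann equivalence of projections relative to `M`. -/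
def MvNEquiv (M : Set (H →L[ℂ] H)) (e f : H →L[ℂ] H) : Prop :=
  ∃ v ∈ M, star v * v = e ∧ v * star v = f

/-- `e` is finite relative to `M`. -/
def FiniteProj (M : Set (H →L[ℂ] H)) (e : H →L[ℂ] H) : Prop :=
  ∀ f ∈ M, IsProjOp f → SubProj f e → MvNEquiv M f e → f = e

/-- `e` is an abelian projection relative to `M`: the corner `eMe` is commutative. -/
def AbelianProj (M : Set (H →L[ℂ] H)) (e : H →L[ℂ] H) : Prop :=
  ∀ x ∈ M, ∀ y ∈ M, (e * x * e) * (e * y * e) = (e * y * e) * (e * x * e)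

/-- A von Neumann algebra (given as a set) is of type III: no nonzero finite projections. -/
def TypeIII (M : Set (H →L[ℂ] H)) : Prop :=
  ∀ e ∈ M, IsProjOp e → FiniteProj M e → e = 0

/-- Type II₁ : finite with no nonzero abelian projections. -/
def TypeII1 (M : Set (H →L[ℂ] H)) : Prop :=
  FiniteProj M 1 ∧ ∀ e ∈ M, IsProjOp e → AbelianProj M e → e = 0

/-- Type I_n : the identity is the sum of `n` orthogonal, mutually equivalent
abelian projections. -/
def TypeI (M : Set (H →L[ℂ] H)) (n : Cardinal) : Prop :=
  ∃ (ι : Type) (E : ι → H →L[ℂ] H), Cardinal.mk ι = n ∧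
    (∀ a, E a ∈ M ∧ IsProjOp (E a) ∧ AbelianProj M (E a)) ∧
    (Pairwise fun a b => E a * E b = 0) ∧
    (∀ a b, MvNEquiv M (E a) (E b)) ∧
    (∀ v : H, HasSum (fun a => (E a) v) v)

/-- The scalar operators. -/
def scalarOps (H : Type*) [NormedAddCommGroup H] [InnerProductSpace ℂ H] [CompleteSpace H] :
    Set (H →L[ℂ] H) := Set.range fun c : ℂ => c • (1 : H →L[ℂ] H)

/-- `M` is a factor. -/
def IsFactor (M : Set (H →L[ℂ] H)) : Prop := centerSet M = scalarOps H

/-- `R` is graded by the self-adjoint unitary `Γ`. -/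
def GradedBy (R : Set (H →L[ℂ] H)) (Γ : H →L[ℂ] H) : Prop :=
  IsSAU Γ ∧ ∀ x ∈ R, Γ * x * Γ ∈ R

/-- The von Neumann algebra generated by a (star-closed, unital) set:
its double commutant. -/
def genVN (S : Set (H →L[ℂ] H)) : Set (H →L[ℂ] H) :=
  Set.centralizer (Set.centralizer S)

/-- `c` is the central support of `T` in `M`. -/
def IsCentralSupport (M : Set (H →L[ℂ] H)) (T c : H →L[ℂ] H) : Prop :=
  c ∈ centerSet M ∧ IsProjOp c ∧ c * T = T ∧
    ∀ d ∈ centerSet M, IsProjOp d → d * T = T → c * d = c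

/-!
Let `e ∈ R` be finite, and let `θ x = Γ * x * Γ`. If `X ∈ R` satisfies `e * X = X` and `star X * X`
is even, then the initial projection of the polar decomposition of `X` is even and equivalent to a
subprojection of `e`. It is therefore finite in the even part, hence zero, and so `X = 0`.

A self-adjoint `Y` with `e * Y = Y` and `Y * Γ ∈ R` yields two such elements, `|Y| ± Y * Γ`, so `Y`
vanishes too. Applied to the self-adjoint and skew-adjoint parts of `e * x * Γ * e`, this shows
`e * R * θ e = 0`. Then the even projection `e + θ e` inherits finiteness from its two summands, so
it is zero, which forces `e = 0`.
-/

theorem eq_zero_of_add_eq_zero_of_sub_eq_zero {A : Type*} [AddCommGroup A] [IsAddTorsionFree A]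
    {a b : A} (hadd : a + b = 0) (hsub : a - b = 0) : a = 0 :=
  self_eq_neg.mp ((sub_eq_zero.mp hsub).trans (eq_neg_of_add_eq_zero_right hadd))

theorem commute_of_add_mul_eq_self {A : Type*} [NonUnitalSemiring A] {e f v : A}
    (hleft : (e + f) * v = v) (hright : v * (e + f) = v) (hef : e * v * f = 0)
    (hfe : f * v * e = 0) : Commute e v := by
  calc e * v = e * (v * (e + f)) := by rw [hright]
    _ = e * v * e := by rw [mul_add, mul_add, ← mul_assoc, ← mul_assoc, hef, add_zero]
    _ = (e + f) * v * e := by rw [add_mul, add_mul, hfe, add_zero]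
    _ = v * e := by rw [hleft]

section CStarRing

variable {A : Type*} [NonUnitalNormedRing A] [StarRing A] [CStarRing A]

theorem mul_star_mul_self_of_isIdempotentElem {v : A} (h : IsIdempotentElem (star v * v)) :
    v * (star v * v) = v := by
  refine sub_eq_zero.mp ((CStarRing.star_mul_self_eq_zero_iff _).mp ?_)
  have hstar : star (star v * v) = star v * v := IsSelfAdjoint.star_mul_self v
  generalize hp : star v * v = p at h hstar ⊢
  calc star (v * p - v) * (v * p - v)
      = p * (star v * v) * p - p * (star v * v) - (star v * v) * p + star v * v := by
        rw [star_sub, star_mul, hstar]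
        noncomm_ring
    _ = 0 := by simp only [hp, h.eq, sub_self, zero_sub, neg_add_cancel]

theorem mul_star_self_mul_of_isIdempotentElem {v : A} (h : IsIdempotentElem (v * star v)) :
    v * star v * v = v := by
  have hstar := mul_star_mul_self_of_isIdempotentElem (v := star v) (by rwa [star_star])
  simpa [mul_assoc] using congrArg star hstar

end CStarRing

section Douglas

variable {𝕜 E F G : Type*} [RCLike 𝕜] [NormedAddCommGroup E] [NormedSpace 𝕜 E]
  [NormedAddCommGroup F] [InnerProductSpace 𝕜 F] [CompleteSpace F]
  [NormedAddCommGroup G] [NormedSpace 𝕜 G]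

theorem eq_of_comp_eq_of_eqOn_orthogonal_range (A : E →L[𝕜] F) {B C : F →L[𝕜] G}
    (hA : B ∘L A = C ∘L A) (hperp : ∀ y ∈ A.rangeᗮ, B y = C y) : B = C := by
  have hclosure : Set.EqOn B C (A.range.topologicalClosure : Submodule 𝕜 F) := by
    refine Set.EqOn.closure ?_ B.continuous C.continuous
    rintro _ ⟨x, rfl⟩
    exact DFunLike.congr_fun hA x
  ext y
  obtain ⟨u, hu, w, hw, rfl⟩ := A.range.topologicalClosure.exists_add_mem_mem_orthogonal y
  rw [Submodule.orthogonal_closure] at hw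
  rw [map_add, map_add, hclosure hu, hperp w hw]

theorem exists_comp_eq_of_norm_le [CompleteSpace G] (A : E →L[𝕜] F) (B : E →L[𝕜] G) (c : ℝ)
    (hBA : ∀ x, ‖B x‖ ≤ c * ‖A x‖) :
    ∃ U : F →L[𝕜] G, U ∘L A = B ∧ ∀ y ∈ A.rangeᗮ, U y = 0 := by
  let K := A.range.topologicalClosure
  let A' : E →ₗ[𝕜] K := (A : E →ₗ[𝕜] F).codRestrict K fun x =>
    A.range.le_topologicalClosure ⟨x, rfl⟩
  have hdense : DenseRange A' := by
    intro y
    rw [closure_subtype, ← Set.range_comp]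
    exact y.2
  let U : K →L[𝕜] G := (B : E →ₗ[𝕜] G).extendOfNorm A'
  refine ⟨U ∘L K.orthogonalProjectionOnto, ?_, fun y hy => ?_⟩
  · ext x
    have hproj : K.orthogonalProjectionOnto (A x) = A' x :=
      Submodule.orthogonalProjectionOnto_mem_subspace_eq_self (A' x)
    have hU : U (A' x) = B x := LinearMap.extendOfNorm_eq hdense ⟨c, hBA⟩ x
    rw [ContinuousLinearMap.comp_apply, ContinuousLinearMap.comp_apply, hproj, hU]
  · have hy' : y ∈ Kᗮ := by rwa [Submodule.orthogonal_closure]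
    rw [ContinuousLinearMap.comp_apply,
      Submodule.orthogonalProjectionOnto_apply_of_mem_orthogonal hy', map_zero]

end Douglas

section Polar

theorem commute_abs_of_commute_star_mul_self {T X : H →L[ℂ] H} (h : Commute T (star X * X)) :
    Commute T (CFC.abs X) :=
  (h.symm.cfcₙ_nnreal _).symm

theorem norm_abs_apply (X : H →L[ℂ] H) (y : H) : ‖CFC.abs X y‖ = ‖X y‖ := by
  have h : star (CFC.abs X) * CFC.abs X = star X * X := by
    rw [(CFC.abs_nonneg X).isSelfAdjoint.star_eq, CFC.abs_mul_abs]
  simp only [ContinuousLinearMap.apply_norm_eq_sqrt_inner_adjoint_left,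
    ← ContinuousLinearMap.star_eq_adjoint, ← ContinuousLinearMap.mul_def, h]

theorem abs_apply_eq_zero_iff {X : H →L[ℂ] H} {y : H} : CFC.abs X y = 0 ↔ X y = 0 := by
  rw [← norm_eq_zero, norm_abs_apply, norm_eq_zero]

theorem mem_orthogonal_range_abs_iff {X : H →L[ℂ] H} {y : H} :
    y ∈ (CFC.abs X).rangeᗮ ↔ X y = 0 := by
  rw [ContinuousLinearMap.orthogonal_range, ← ContinuousLinearMap.star_eq_adjoint,
    (CFC.abs_nonneg X).isSelfAdjoint.star_eq]
  exact abs_apply_eq_zero_iff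

theorem eq_of_mul_abs_eq {X B C : H →L[ℂ] H} (habs : B * CFC.abs X = C * CFC.abs X)
    (hker : ∀ y, X y = 0 → B y = C y) : B = C :=
  eq_of_comp_eq_of_eqOn_orthogonal_range (CFC.abs X) habs fun y hy =>
    hker y (mem_orthogonal_range_abs_iff.mp hy)

theorem mul_abs_eq_abs {X e : H →L[ℂ] H} (he : e * star X = star X) :
    e * CFC.abs X = CFC.abs X := by
  refine eq_of_mul_abs_eq (X := X) ?_ fun y hy => ?_
  · rw [mul_assoc, CFC.abs_mul_abs, ← mul_assoc, he]
  · rw [mul_apply_eq_comp, abs_apply_eq_zero_iff.mpr hy, map_zero]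

theorem commute_of_commute_mul_abs {X B T : H →L[ℂ] H} (hker : ∀ y, X y = 0 → B y = 0)
    (hTX : Commute T (CFC.abs X)) (hTB : Commute T (B * CFC.abs X)) : Commute T B := by
  refine eq_of_mul_abs_eq (X := X) ?_ fun y hy => ?_
  · rw [mul_assoc, hTB.eq, mul_assoc, ← hTX.eq, mul_assoc]
  · have habs : CFC.abs X (T y) = 0 := by
      rw [← mul_apply_eq_comp, ← hTX.eq, mul_apply_eq_comp,
        abs_apply_eq_zero_iff.mpr hy, map_zero]
    rw [mul_apply_eq_comp, mul_apply_eq_comp, hker y hy, map_zero,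
      hker (T y) (abs_apply_eq_zero_iff.mp habs)]

/-- `U` is the partial isometry in the polar decomposition `X = U * |X|`. Only the vanishing of `U`
on `ker X` is recorded: together with the factorization it determines `U`. -/
structure IsPolarPart (X U : H →L[ℂ] H) : Prop where
  mul_abs : U * CFC.abs X = X
  apply_eq_zero : ∀ y, X y = 0 → U y = 0

theorem exists_isPolarPart (X : H →L[ℂ] H) : ∃ U, IsPolarPart X U := by
  obtain ⟨U, hU, hker⟩ := exists_comp_eq_of_norm_le (CFC.abs X) X 1 fun y => by
    rw [one_mul, norm_abs_apply]
  exact ⟨U, hU, fun y hy => hker y (mem_orthogonal_range_abs_iff.mpr hy)⟩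

namespace IsPolarPart

variable {X U : H →L[ℂ] H}

theorem mul_eq_self (h : IsPolarPart X U) {e : H →L[ℂ] H} (he : e * X = X) : e * U = U := by
  refine eq_of_mul_abs_eq (X := X) ?_ fun y hy => ?_
  · rw [mul_assoc, h.mul_abs, he]
  · rw [mul_apply_eq_comp, h.apply_eq_zero y hy, map_zero]

theorem star_mul_self_mul_abs (h : IsPolarPart X U) :
    star U * U * CFC.abs X = CFC.abs X := by
  set A := CFC.abs X with hA
  have hstar : star A = A := (CFC.abs_nonneg X).isSelfAdjoint.star_eq
  set D := star U * U * A - A with hD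
  have hAD : A * D = 0 := by
    have : A * (star U * U * A) = star (U * A) * (U * A) := by
      simp only [star_mul, hstar, mul_assoc]
    rw [hD, mul_sub, this, h.mul_abs, hA, CFC.abs_mul_abs, sub_self]
  have hUD : U * D = 0 := by
    ext y
    exact h.apply_eq_zero _ (abs_apply_eq_zero_iff.mp (DFunLike.congr_fun hAD y))
  refine sub_eq_zero.mp ((CStarRing.star_mul_self_eq_zero_iff D).mp ?_)
  calc star D * D = A * star U * (U * D) - A * D := by
        rw [hD, star_sub, star_mul, star_mul, star_star, hstar]
        noncomm_ring
    _ = 0 := by rw [hUD, hAD, mul_zero, sub_zero]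

theorem star_mul_self_apply_eq_zero (h : IsPolarPart X U) (y : H) (hy : X y = 0) :
    (star U * U) y = 0 := by
  rw [mul_apply_eq_comp, h.apply_eq_zero y hy, map_zero]

theorem isProjOp_star_mul_self (h : IsPolarPart X U) : IsProjOp (star U * U) := by
  refine ⟨eq_of_mul_abs_eq (X := X) ?_ fun y hy => ?_, IsSelfAdjoint.star_mul_self U⟩
  · rw [mul_assoc, h.star_mul_self_mul_abs, h.star_mul_self_mul_abs]
  · rw [mul_apply_eq_comp, h.star_mul_self_apply_eq_zero y hy, map_zero]

theorem commute_star_mul_self (h : IsPolarPart X U) {T : H →L[ℂ] H}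
    (hT : Commute T (star X * X)) : Commute T (star U * U) := by
  have hTabs := commute_abs_of_commute_star_mul_self hT
  refine commute_of_commute_mul_abs h.star_mul_self_apply_eq_zero hTabs ?_
  rwa [h.star_mul_self_mul_abs]

end IsPolarPart

end Polar

section Membership

variable {R : VonNeumannAlgebra H}

theorem mem_of_forall_mem_commutant_commute {x : H →L[ℂ] H}
    (h : ∀ T ∈ R.commutant, Commute T x) : x ∈ R := by
  rw [← R.commutant_commutant, VonNeumannAlgebra.mem_commutant_iff]
  exact h

theorem commute_of_mem_commutant {T x : H →L[ℂ] H} (hT : T ∈ R.commutant) (hx : x ∈ R) :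
    Commute T x :=
  (VonNeumannAlgebra.mem_commutant_iff.mp hT x hx).symm

theorem abs_mem_of_star_mul_self_mem {X : H →L[ℂ] H} (hX : star X * X ∈ R) : CFC.abs X ∈ R :=
  mem_of_forall_mem_commutant_commute fun _ hT =>
    commute_abs_of_commute_star_mul_self (commute_of_mem_commutant hT hX)

theorem IsPolarPart.mem {X U : H →L[ℂ] H} (h : IsPolarPart X U) (hX : X ∈ R) : U ∈ R := by
  refine mem_of_forall_mem_commutant_commute fun T hT => ?_
  refine commute_of_commute_mul_abs h.apply_eq_zero ?_ ?_
  · exact commute_abs_of_commute_star_mul_self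
      (commute_of_mem_commutant hT (mul_mem (star_mem hX) hX))
  · rw [h.mul_abs]
    exact commute_of_mem_commutant hT hX

end Membership

section FiniteProj

theorem isProjOp_iff_isStarProjection {e : H →L[ℂ] H} : IsProjOp e ↔ IsStarProjection e :=
  isStarProjection_iff'.symm

theorem FiniteProj.anti {M N : Set (H →L[ℂ] H)} {e : H →L[ℂ] H} (he : FiniteProj M e)
    (hNM : N ⊆ M) : FiniteProj N e := by
  rintro f hf hfp hfe ⟨v, hv, hvf⟩
  exact he f (hNM hf) hfp hfe ⟨v, hNM hv, hvf⟩

theorem IsProjOp.mul_eq_self_of_mul_star_self {f v : H →L[ℂ] H} (hfp : IsProjOp f)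
    (hv : v * star v = f) : f * v = v := by
  rw [← hv]
  exact mul_star_self_mul_of_isIdempotentElem (hv ▸ hfp.1)

theorem mul_mul_eq_zero_symm {S : Type*} [SetLike S (H →L[ℂ] H)] [StarMemClass S (H →L[ℂ] H)]
    {M : S} {e f : H →L[ℂ] H} (hep : IsProjOp e) (hfp : IsProjOp f)
    (hef : ∀ x ∈ M, e * x * f = 0) : ∀ x ∈ M, f * x * e = 0 := fun x hx => by
  simpa [hep.2, hfp.2, mul_assoc] using congrArg star (hef (star x) (star_mem hx))

variable {S : Type*} [SetLike S (H →L[ℂ] H)] [MulMemClass S (H →L[ℂ] H)]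
  [StarMemClass S (H →L[ℂ] H)] {M : S} {e f : H →L[ℂ] H}

theorem finiteProj_iff (hep : IsProjOp e) :
    FiniteProj (M : Set (H →L[ℂ] H)) e ↔
      ∀ t ∈ M, t * e = t → t * star t = e → star t * t = e := by
  constructor
  · intro he t ht hte htt
    have het : e * t = t := hep.mul_eq_self_of_mul_star_self htt
    have heset : e * star t = star t := by simpa [hep.2] using congrArg star hte
    refine he _ (mul_mem (star_mem ht) ht) ⟨?_, IsSelfAdjoint.star_mul_self t⟩ ⟨?_, ?_⟩
      ⟨t, ht, rfl, htt⟩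
    · rw [mul_assoc, ← mul_assoc t, htt, het]
    · rw [mul_assoc, hte]
    · rw [← mul_assoc, heset]
  · rintro h f - hfp ⟨hfe, -⟩ ⟨v, hv, rfl, hve⟩
    have hvf : v * (star v * v) = v := mul_star_mul_self_of_isIdempotentElem hfp.1
    have hve' : v * e = v := by rw [← hvf, mul_assoc, hfe]
    exact h v hv hve' hve

theorem FiniteProj.of_mvNEquiv (he : FiniteProj (M : Set (H →L[ℂ] H)) e) (hep : IsProjOp e)
    (hfp : IsProjOp f) (hfe : MvNEquiv (M : Set (H →L[ℂ] H)) f e) :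
    FiniteProj (M : Set (H →L[ℂ] H)) f := by
  obtain ⟨w, hw, hwf, hwe⟩ := hfe
  rw [finiteProj_iff hep] at he
  rw [finiteProj_iff hfp]
  intro v hv hvf hvv
  have hfv : f * v = v := hfp.mul_eq_self_of_mul_star_self hvv
  have hfsv : f * star v = star v := by simpa [hfp.2] using congrArg star hvf
  have hstar : star (w * v * star w) = w * star v * star w := by
    simp only [star_mul, star_star, mul_assoc]
  have hconj : w * (star v * v) * star w = e := by
    calc w * (star v * v) * star w
        = w * star v * (f * v) * star w := by rw [hfv]; simp only [mul_assoc]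
      _ = star (w * v * star w) * (w * v * star w) := by
        rw [hstar, ← hwf]; simp only [mul_assoc]
      _ = e := by
        refine he _ (mul_mem (mul_mem hw hv) (star_mem hw)) ?_ ?_
        · calc w * v * star w * e = w * (v * (star w * w)) * star w := by
                rw [← hwe]; simp only [mul_assoc]
            _ = w * v * star w := by rw [hwf, hvf]
        · calc w * v * star w * star (w * v * star w)
              = w * (v * (star w * w) * star v) * star w := by
                rw [hstar]; simp only [mul_assoc]
            _ = w * (star w * w) * star w := by rw [hwf, hvf, hvv]
            _ = e := by rw [← mul_assoc, hwe, mul_assoc, hwe, hep.1]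
  calc star v * v = f * (star v * v) * f := by
        rw [← mul_assoc, hfsv, mul_assoc, hvf]
    _ = star w * (w * (star v * v) * star w) * w := by rw [← hwf]; simp only [mul_assoc]
    _ = star w * w * (star w * w) := by rw [hconj, ← hwe]; simp only [mul_assoc]
    _ = f := by rw [hwf, hfp.1]

theorem FiniteProj.star_mul_mul_eq_of_commute (he : FiniteProj (M : Set (H →L[ℂ] H)) e)
    (heM : e ∈ M) (hep : IsProjOp e) {v : H →L[ℂ] H} (hv : v ∈ M) (hev : Commute e v)
    (hevv : e * (v * star v) = e) : star v * e * v = e := by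
  have h := (finiteProj_iff hep).mp he (e * v) (mul_mem heM hv)
    (by rw [mul_assoc, ← hev.eq, ← mul_assoc, hep.1])
    (by rw [star_mul, hep.2, mul_assoc, ← mul_assoc v, ← mul_assoc, hevv, hep.1])
  rwa [star_mul, hep.2, mul_assoc, ← mul_assoc e, hep.1, ← mul_assoc] at h

end FiniteProj

section FiniteProjRing

variable {S : Type*} [SetLike S (H →L[ℂ] H)] [NonUnitalSubringClass S (H →L[ℂ] H)]
  [StarMemClass S (H →L[ℂ] H)] {M : S} {e f : H →L[ℂ] H}

theorem FiniteProj.of_subProj (he : FiniteProj (M : Set (H →L[ℂ] H)) e) (heM : e ∈ M)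
    (hep : IsProjOp e) (hfM : f ∈ M) (hfp : IsProjOp f) (hfe : SubProj f e) :
    FiniteProj (M : Set (H →L[ℂ] H)) f := by
  rw [finiteProj_iff hep] at he
  rw [finiteProj_iff hfp]
  intro v hv hvf hvv
  have hfv : f * v = v := hfp.mul_eq_self_of_mul_star_self hvv
  obtain ⟨d, hd⟩ : ∃ d, d = e - f := ⟨_, rfl⟩
  have hdp : IsProjOp d := by
    rw [isProjOp_iff_isStarProjection] at *
    exact hd ▸ hfp.sub_of_mul_eq_left hep hfe.1
  have hvd : v * d = 0 := by rw [hd, mul_sub, ← hvf, mul_assoc, hfe.1, mul_assoc, hfp.1, sub_self]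
  have hdv : d * v = 0 := by
    rw [hd, sub_mul, ← hfv, ← mul_assoc, hfe.2, ← mul_assoc, hfp.1, sub_self]
  have hdsv : d * star v = 0 := by simpa [hdp.2] using congrArg star hvd
  have hsvd : star v * d = 0 := by simpa [hdp.2] using congrArg star hdv
  have hstar : star (v + d) = star v + d := by rw [star_add, hdp.2]
  have h : star (v + d) * (v + d) = e := by
    refine he _ (add_mem hv (hd ▸ sub_mem heM hfM)) ?_ ?_
    · have hve : v * e = v := by rw [← hvf, mul_assoc, hfe.1]
      rw [add_mul, hve, hd, sub_mul, hep.1, hfe.1]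
    · rw [hstar, add_mul, mul_add, mul_add, hvv, hvd, hdsv, hdp.1, add_zero, zero_add, hd,
        add_sub_cancel]
  rw [hstar, add_mul, mul_add, mul_add, hsvd, hdv, hdp.1, add_zero, zero_add] at h
  rw [eq_sub_of_add_eq h, hd, sub_sub_cancel]

theorem FiniteProj.add (he : FiniteProj (M : Set (H →L[ℂ] H)) e)
    (hf : FiniteProj (M : Set (H →L[ℂ] H)) f) (heM : e ∈ M) (hfM : f ∈ M) (hep : IsProjOp e)
    (hfp : IsProjOp f) (hef : ∀ x ∈ M, e * x * f = 0) :
    FiniteProj (M : Set (H →L[ℂ] H)) (e + f) := by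
  have hfe : ∀ x ∈ M, f * x * e = 0 := mul_mul_eq_zero_symm hep hfp hef
  have hef0 : e * f = 0 := by simpa [hep.1] using hef e heM
  have hfe0 : f * e = 0 := by simpa [hfp.1] using hfe f hfM
  have hp : IsProjOp (e + f) := by
    rw [isProjOp_iff_isStarProjection] at *
    exact hep.add hfp hef0
  rw [finiteProj_iff hp]
  intro v hv hvp hvv
  have hpv : (e + f) * v = v := hp.mul_eq_self_of_mul_star_self hvv
  have hev : Commute e v := commute_of_add_mul_eq_self hpv hvp (hef v hv) (hfe v hv)
  have hfv : Commute f v := by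
    rw [add_comm] at hpv hvp
    exact commute_of_add_mul_eq_self hpv hvp (hfe v hv) (hef v hv)
  have hevv : e * (v * star v) = e := by rw [hvv, mul_add, hep.1, hef0, add_zero]
  have hfvv : f * (v * star v) = f := by rw [hvv, mul_add, hfp.1, hfe0, zero_add]
  calc star v * v = star v * e * v + star v * f * v := by
        rw [← add_mul, ← mul_add, mul_assoc, hpv]
    _ = e + f := by
      rw [he.star_mul_mul_eq_of_commute heM hep hv hev hevv,
        hf.star_mul_mul_eq_of_commute hfM hfp hv hfv hfvv]

end FiniteProjRing

section Grading

variable {Γ : H →L[ℂ] H}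

namespace IsSAU

theorem mul_mul_cancel_left (hΓ : IsSAU Γ) (x : H →L[ℂ] H) : Γ * (Γ * x) = x := by
  rw [← mul_assoc, hΓ.2, one_mul]

theorem conj_conj (hΓ : IsSAU Γ) (x : H →L[ℂ] H) : Γ * (Γ * x * Γ) * Γ = x := by
  simp only [mul_assoc, hΓ.2, mul_one, hΓ.mul_mul_cancel_left]

theorem conj_mul_conj (hΓ : IsSAU Γ) (x y : H →L[ℂ] H) :
    (Γ * x * Γ) * (Γ * y * Γ) = Γ * (x * y) * Γ := by
  simp only [mul_assoc, hΓ.mul_mul_cancel_left]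

theorem star_conj (hΓ : IsSAU Γ) (x : H →L[ℂ] H) : star (Γ * x * Γ) = Γ * star x * Γ := by
  simp only [star_mul, hΓ.1, mul_assoc]

end IsSAU

theorem IsProjOp.conj {e : H →L[ℂ] H} (he : IsProjOp e) (hΓ : IsSAU Γ) :
    IsProjOp (Γ * e * Γ) :=
  ⟨by rw [hΓ.conj_mul_conj, he.1], by rw [hΓ.star_conj, he.2]⟩

theorem SubProj.conj {f e : H →L[ℂ] H} (h : SubProj f e) (hΓ : IsSAU Γ) :
    SubProj (Γ * f * Γ) (Γ * e * Γ) :=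
  ⟨by rw [hΓ.conj_mul_conj, h.1], by rw [hΓ.conj_mul_conj, h.2]⟩

theorem MvNEquiv.conj {M : Set (H →L[ℂ] H)} {f e : H →L[ℂ] H} (h : MvNEquiv M f e)
    (hΓ : IsSAU Γ) (hM : ∀ x ∈ M, Γ * x * Γ ∈ M) : MvNEquiv M (Γ * f * Γ) (Γ * e * Γ) := by
  obtain ⟨v, hv, hvf, hve⟩ := h
  exact ⟨_, hM v hv, by rw [hΓ.star_conj, hΓ.conj_mul_conj, hvf],
    by rw [hΓ.star_conj, hΓ.conj_mul_conj, hve]⟩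

theorem FiniteProj.conj {M : Set (H →L[ℂ] H)} {e : H →L[ℂ] H} (he : FiniteProj M e)
    (hΓ : IsSAU Γ) (hM : ∀ x ∈ M, Γ * x * Γ ∈ M) : FiniteProj M (Γ * e * Γ) := by
  intro f hf hfp hfe hequiv
  have hfe' := hfe.conj hΓ
  have hequiv' := hequiv.conj hΓ hM
  rw [hΓ.conj_conj] at hfe' hequiv'
  rw [← he _ (hM f hf) (hfp.conj hΓ) hfe' hequiv', hΓ.conj_conj]

theorem mem_evenPart_of_commute {M : Set (H →L[ℂ] H)} {x : H →L[ℂ] H} (hΓ : IsSAU Γ)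
    (hx : x ∈ M) (hΓx : Commute Γ x) : x ∈ evenPart M Γ :=
  ⟨hx, by rw [hΓx.eq, mul_assoc, hΓ.2, mul_one]⟩

variable {R : VonNeumannAlgebra H} {e : H →L[ℂ] H}

theorem eq_zero_of_commute_star_mul_self (hΓ : IsSAU Γ)
    (h0 : TypeIII (evenPart (R : Set (H →L[ℂ] H)) Γ)) (heR : e ∈ R) (hep : IsProjOp e)
    (he : FiniteProj (R : Set (H →L[ℂ] H)) e) {X : H →L[ℂ] H} (hX : X ∈ R) (heX : e * X = X)
    (hΓX : Commute Γ (star X * X)) : X = 0 := by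
  obtain ⟨U, hU⟩ := exists_isPolarPart X
  have hUR : U ∈ R := hU.mem hX
  have heU : e * U = U := hU.mul_eq_self heX
  have hUe : star U * e = star U := by simpa [hep.2] using congrArg star heU
  have hinit : IsProjOp (star U * U) := hU.isProjOp_star_mul_self
  have hfinal : IsProjOp (U * star U) := by
    refine ⟨?_, IsSelfAdjoint.mul_star_self U⟩
    rw [← mul_assoc, mul_assoc U, mul_star_mul_self_of_isIdempotentElem hinit.1]
  have hfinal_fin : FiniteProj (R : Set (H →L[ℂ] H)) (U * star U) :=
    he.of_subProj heR hep (mul_mem hUR (star_mem hUR)) hfinal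
      ⟨by rw [mul_assoc, hUe], by rw [← mul_assoc, heU]⟩
  have hinit_fin : FiniteProj (R : Set (H →L[ℂ] H)) (star U * U) :=
    hfinal_fin.of_mvNEquiv hfinal hinit ⟨U, hUR, rfl, rfl⟩
  have hinit_even : star U * U ∈ evenPart (R : Set (H →L[ℂ] H)) Γ :=
    mem_evenPart_of_commute hΓ (mul_mem (star_mem hUR) hUR) (hU.commute_star_mul_self hΓX)
  have hinit_zero : star U * U = 0 := h0 _ hinit_even hinit (hinit_fin.anti fun _ hx => hx.1)
  rw [← hU.mul_abs, (CStarRing.star_mul_self_eq_zero_iff U).mp hinit_zero, zero_mul]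

theorem commute_star_mul_self_abs_add_mul (hΓ : IsSAU Γ) {Y : H →L[ℂ] H} (hY : IsSelfAdjoint Y) :
    Commute Γ (star (CFC.abs Y + Y * Γ) * (CFC.abs Y + Y * Γ)) := by
  have habs : star (CFC.abs Y) = CFC.abs Y := (CFC.abs_nonneg Y).isSelfAdjoint.star_eq
  have hexpand : star (CFC.abs Y + Y * Γ) * (CFC.abs Y + Y * Γ) =
      (Y * Y + Γ * (Y * Y) * Γ) + (CFC.abs Y * Y * Γ + Γ * (CFC.abs Y * Y)) := by
    have hsq : CFC.abs Y * CFC.abs Y = Y * Y := by rw [CFC.abs_mul_abs, hY.star_eq]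
    rw [star_add, star_mul, habs, hY.star_eq, hΓ.1, add_mul, mul_add, mul_add, hsq,
      mul_assoc Γ Y (CFC.abs Y), ← (CFC.commute_abs_self Y).eq]
    noncomm_ring
  rw [hexpand, commute_iff_eq]
  simp only [mul_add, add_mul, mul_assoc, hΓ.mul_mul_cancel_left, hΓ.2, mul_one]
  abel

theorem abs_add_mul_eq_zero (hΓ : IsSAU Γ)
    (h0 : TypeIII (evenPart (R : Set (H →L[ℂ] H)) Γ)) (heR : e ∈ R) (hep : IsProjOp e)
    (he : FiniteProj (R : Set (H →L[ℂ] H)) e) {Y : H →L[ℂ] H} (hY : IsSelfAdjoint Y)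
    (heY : e * Y = Y) (hYR : Y * Γ ∈ R) : CFC.abs Y + Y * Γ = 0 := by
  have hsq : star Y * Y = Y * Γ * star (Y * Γ) := by
    rw [star_mul, hΓ.1, hY.star_eq, mul_assoc, hΓ.mul_mul_cancel_left]
  have habs : CFC.abs Y ∈ R :=
    abs_mem_of_star_mul_self_mem (hsq ▸ mul_mem hYR (star_mem hYR))
  have heabs : e * CFC.abs Y = CFC.abs Y := mul_abs_eq_abs (by rwa [hY.star_eq])
  refine eq_zero_of_commute_star_mul_self hΓ h0 heR hep he (add_mem habs hYR) ?_
    (commute_star_mul_self_abs_add_mul hΓ hY)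
  rw [mul_add, heabs, ← mul_assoc, heY]

theorem eq_zero_of_isSelfAdjoint_of_mul_mem (hΓ : IsSAU Γ)
    (h0 : TypeIII (evenPart (R : Set (H →L[ℂ] H)) Γ)) (heR : e ∈ R) (hep : IsProjOp e)
    (he : FiniteProj (R : Set (H →L[ℂ] H)) e) {Y : H →L[ℂ] H} (hY : IsSelfAdjoint Y)
    (heY : e * Y = Y) (hYR : Y * Γ ∈ R) : Y = 0 := by
  have hplus : CFC.abs Y + Y * Γ = 0 := abs_add_mul_eq_zero hΓ h0 heR hep he hY heY hYR
  have hminus : CFC.abs Y - Y * Γ = 0 := by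
    simpa only [CFC.abs_neg, neg_mul, ← sub_eq_add_neg] using
      abs_add_mul_eq_zero hΓ h0 heR hep he hY.neg (by rw [mul_neg, heY])
        (by rw [neg_mul]; exact neg_mem hYR)
  have : IsAddTorsionFree (H →L[ℂ] H) := .of_isTorsionFree ℂ _
  exact CFC.abs_eq_zero_iff.mp (eq_zero_of_add_eq_zero_of_sub_eq_zero hplus hminus)

theorem mul_mul_conj_eq_zero (hΓ : IsSAU Γ) (hinv : ∀ x ∈ R, Γ * x * Γ ∈ R)
    (h0 : TypeIII (evenPart (R : Set (H →L[ℂ] H)) Γ)) (heR : e ∈ R) (hep : IsProjOp e)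
    (he : FiniteProj (R : Set (H →L[ℂ] H)) e) :
    ∀ x ∈ R, e * x * (Γ * e * Γ) = 0 := by
  have hstar (x : H →L[ℂ] H) : star (e * x * Γ * e) = e * Γ * star x * e := by
    simp only [star_mul, hΓ.1, hep.2, mul_assoc]
  have hsum (x : H →L[ℂ] H) (hx : x ∈ R) : e * x * Γ * e + e * Γ * star x * e = 0 := by
    refine eq_zero_of_isSelfAdjoint_of_mul_mem hΓ h0 heR hep he ?_ ?_ ?_
    · rw [← hstar]
      exact IsSelfAdjoint.add_star_self _
    · simp only [mul_add, ← mul_assoc, hep.1]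
    · have h := add_mem (mul_mem (mul_mem heR hx) (hinv e heR))
        (mul_mem heR (hinv _ (mul_mem (star_mem hx) heR)))
      simpa only [add_mul, mul_assoc] using h
  intro x hx
  have hdiff : e * x * Γ * e - e * Γ * star x * e = 0 := by
    have hI := hsum (Complex.I • x) (R.toStarSubalgebra.smul_mem hx Complex.I)
    rw [star_smul, Complex.star_def, Complex.conj_I, neg_smul, mul_neg, neg_mul,
      ← sub_eq_add_neg] at hI
    simp only [mul_smul_comm, smul_mul_assoc, ← smul_sub] at hI
    exact (smul_eq_zero_iff_right Complex.I_ne_zero).mp hI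
  have : IsAddTorsionFree (H →L[ℂ] H) := .of_isTorsionFree ℂ _
  have hzero := eq_zero_of_add_eq_zero_of_sub_eq_zero (hsum x hx) hdiff
  rw [← mul_assoc, ← mul_assoc, hzero, zero_mul]

end Grading

/-- if the even part `R⁰` is of type III, then `R` is of type III. -/
theorem stmt_9 (R : VonNeumannAlgebra H) (Γ : H →L[ℂ] H) (hΓ : IsSAU Γ)
    (hinv : ∀ x ∈ R, Γ * x * Γ ∈ R)
    (h0 : TypeIII (evenPart (R : Set (H →L[ℂ] H)) Γ)) :
    TypeIII (R : Set (H →L[ℂ] H)) := by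
  intro e heR hep he
  set f := Γ * e * Γ
  have hfR : f ∈ R := hinv e heR
  have hfp : IsProjOp f := hep.conj hΓ
  have hfin : FiniteProj (R : Set (H →L[ℂ] H)) f := he.conj hΓ hinv
  have hcorner : ∀ x ∈ R, e * x * f = 0 := mul_mul_conj_eq_zero hΓ hinv h0 heR hep he
  have hef : e * f = 0 := by simpa only [mul_one] using hcorner 1 (one_mem R)
  have heven : e + f ∈ evenPart (R : Set (H →L[ℂ] H)) Γ := by
    refine ⟨add_mem heR hfR, ?_⟩
    rw [mul_add, add_mul, hΓ.conj_conj, add_comm]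
  have hsum : IsProjOp (e + f) := by
    rw [isProjOp_iff_isStarProjection] at *
    exact hep.add hfp hef
  have hsum_fin := he.add hfin heR hfR hep hfp hcorner
  have hzero : e + f = 0 := h0 _ heven hsum (hsum_fin.anti fun _ hx => hx.1)
  calc e = e * (e + f) := by rw [mul_add, hep.1, hef, add_zero]
    _ = 0 := by rw [hzero, mul_zero]
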